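/- Let 𝒰 be a cofinite subsymmetric ultrafilter on FIN_{±k} with 𝒰 + (−T)^j 𝒰 = (−T)^j 𝒰 + 𝒰 = 𝒰 for all j ≤ k. For every 𝒰-tree U with stem ∅ there exist an infinite block sequence P = (p_n)_{n<ω} in FIN_{±k} and a decreasing sequence A₀ ⊇ A₁ ⊇ ⋯ of subsets of FIN_{±k} such that: (1) for every n, A_n ⊆ U_t ∩ −(U_t)₁ for every t ∈ U with supp(⋃t) ⊆ ⋃_{i<n} supp p_i; and (2) ⟨p_m, …, p_n⟩_{(−T)} ⊆ A_m for all m ≤ n < ω. -/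

import Mathlib

open Function Set

/-- `p` is an element of `FIN_{±k}`: finitely supported, values in `{0, ±1, …, ±k}`,
attaining one of the values `±k`. -/
def IsFin (k : ℕ) (p : ℕ → ℤ) : Prop :=
  (Function.support p).Finite ∧ (∀ n, |p n| ≤ (k : ℤ)) ∧ (∃ n, |p n| = (k : ℤ))

/-- `p < q` in the block ordering: every point of `supp p` precedes every point of `supp q`. -/
def BlockLt (p q : ℕ → ℤ) : Prop :=
  ∀ m n : ℕ, p m ≠ 0 → q n ≠ 0 → m < n

/-- The tetris operation `T`. -/
def tetris (p : ℕ → ℤ) : ℕ → ℤ := fun n =>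
  if 0 < p n then p n - 1 else if p n < 0 then p n + 1 else 0

/-- The sign-flipped tetris operation `-T`. -/
def negT (p : ℕ → ℤ) : ℕ → ℤ := -(tetris p)

/-- The weak tetris operation `S`. -/
def Sop (p : ℕ → ℤ) : ℕ → ℤ := fun n => if |p n| = 1 then 0 else p n

/-- `‖p‖ ≤ c` for the `ℓ∞` norm. -/
def normLe (p : ℕ → ℤ) (c : ℕ) : Prop := ∀ n, |p n| ≤ (c : ℤ)

/-- `(A)_c`, the `c`-fattening of `A`. -/
def approx (c : ℕ) (A : Set (ℕ → ℤ)) : Set (ℕ → ℤ) :=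
  {p | ∃ q ∈ A, normLe (p - q) c}

/-- `P` is an infinite block sequence in `FIN_{±k}`. -/
def IsBlockSeq (k : ℕ) (P : ℕ → ℕ → ℤ) : Prop :=
  (∀ n, IsFin k (P n)) ∧ ∀ m n : ℕ, m < n → BlockLt (P m) (P n)

/-- `t` is a finite block sequence in `FIN_{±k}` (coded as a list). -/
def IsFinBlockSeq (k : ℕ) (t : List (ℕ → ℤ)) : Prop :=
  (∀ p ∈ t, IsFin k p) ∧ t.Pairwise BlockLt

/-- `q ∈ ⟨P⟩_{±k}`: `q = ε₀T^{j₀}(p_{n₀}) + ⋯ + ε_m T^{j_m}(p_{n_m})` with `n₀ < ⋯ < n_m`,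
`εᵢ ∈ {±1}`, `jᵢ < k` and `min jᵢ = 0`. -/
def InSpanPM (k : ℕ) (P : ℕ → ℕ → ℤ) (q : ℕ → ℤ) : Prop :=
  ∃ (m : ℕ) (n : Fin (m + 1) → ℕ) (ε : Fin (m + 1) → ℤ) (j : Fin (m + 1) → ℕ),
    StrictMono n ∧ (∀ i, ε i = 1 ∨ ε i = -1) ∧ (∀ i, j i < k) ∧ (∃ i, j i = 0) ∧
    q = ∑ i, ε i • tetris^[j i] (P (n i))

/-- `q ∈ ⟨P⟩_{(−T)}`. -/
def InSpanNegT (k : ℕ) (P : ℕ → ℕ → ℤ) (q : ℕ → ℤ) : Prop :=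
  ∃ (m : ℕ) (n : Fin (m + 1) → ℕ) (j : Fin (m + 1) → ℕ),
    StrictMono n ∧ (∀ i, j i < k) ∧ (∃ i, j i = 0) ∧
    q = ∑ i, negT^[j i] (P (n i))

/-- `q ∈ ⟨p_a, …, p_b⟩_{(−T)}`. -/
def InSpanNegTRange (k : ℕ) (P : ℕ → ℕ → ℤ) (a b : ℕ) (q : ℕ → ℤ) : Prop :=
  ∃ (m : ℕ) (n : Fin (m + 1) → ℕ) (j : Fin (m + 1) → ℕ),
    StrictMono n ∧ (∀ i, a ≤ n i ∧ n i ≤ b) ∧ (∀ i, j i < k) ∧ (∃ i, j i = 0) ∧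
    q = ∑ i, negT^[j i] (P (n i))

/-- A cofinite ultrafilter on `FIN_{±k}` (coded as an ultrafilter on `ℕ → ℤ`
concentrating on `FIN_{±k}`). -/
def IsCofiniteUF (k : ℕ) (𝒰 : Ultrafilter (ℕ → ℤ)) : Prop :=
  {p | IsFin k p} ∈ 𝒰 ∧ ∀ m : ℕ, {p : ℕ → ℤ | ∀ n < m, p n = 0} ∈ 𝒰

/-- `A ∈ 𝒰 + 𝒱`. -/
def SumMem (𝒰 𝒱 : Ultrafilter (ℕ → ℤ)) (A : Set (ℕ → ℤ)) : Prop :=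
  {p | {q | BlockLt p q ∧ p + q ∈ A} ∈ 𝒱} ∈ 𝒰

/-- `𝒰` is subsymmetric: `A ∈ 𝒰` implies `−(A)₁ ∈ 𝒰`. -/
def IsSubsymmetric (𝒰 : Ultrafilter (ℕ → ℤ)) : Prop :=
  ∀ A ∈ 𝒰, {p : ℕ → ℤ | -p ∈ approx 1 A} ∈ 𝒰

/-- `𝒰 + (−T)^j 𝒰 = (−T)^j 𝒰 + 𝒰 = 𝒰` for all `j ≤ k`. -/
def IsIdempotentUF (k : ℕ) (𝒰 : Ultrafilter (ℕ → ℤ)) : Prop :=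
  ∀ j ≤ k, ∀ A : Set (ℕ → ℤ),
    (SumMem 𝒰 (Ultrafilter.map (negT^[j]) 𝒰) A ↔ A ∈ 𝒰) ∧
    (SumMem (Ultrafilter.map (negT^[j]) 𝒰) 𝒰 A ↔ A ∈ 𝒰)

/-- A cofinite subsymmetric ultrafilter on `FIN_{±k}` idempotent with respect to
all the maps `(−T)^j`, `j ≤ k`. -/
def IsGowersUF (k : ℕ) (𝒰 : Ultrafilter (ℕ → ℤ)) : Prop :=
  IsCofiniteUF k 𝒰 ∧ IsSubsymmetric 𝒰 ∧ IsIdempotentUF k 𝒰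

/-- A `𝒰`-tree on `FIN_{±k}` with stem `s`. -/
structure IsUTree (k : ℕ) (𝒰 : Ultrafilter (ℕ → ℤ)) (U : Set (List (ℕ → ℤ)))
    (s : List (ℕ → ℤ)) : Prop where
  blocks : ∀ t ∈ U, IsFinBlockSeq k t
  prefixClosed : ∀ t ∈ U, ∀ t' : List (ℕ → ℤ), t' <+: t → t' ∈ U
  stemMem : s ∈ U
  stemComparable : ∀ t ∈ U, s <+: t ∨ t <+: s
  branch : ∀ t ∈ U, s <+: t → {p | t ++ [p] ∈ U} ∈ 𝒰

/-- `[U]`, the set of infinite branches of a tree of finite block sequences. -/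
def Branches (U : Set (List (ℕ → ℤ))) : Set (ℕ → ℕ → ℤ) :=
  {P | ∀ n : ℕ, (List.ofFn fun i : Fin n => P i.1) ∈ U}

/-- The space `FIN_{±k}^[∞]` of infinite block sequences. -/
def BlockSeq (k : ℕ) : Type := {P : ℕ → ℕ → ℤ // IsBlockSeq k P}

/-- The metrizable topology on `FIN_{±k}^[∞]`, generated by the basic sets `[s]`. -/
instance BlockSeq.topology (k : ℕ) : TopologicalSpace (BlockSeq k) :=
  TopologicalSpace.generateFrom
    {O | ∃ s : List (ℕ → ℤ),
      O = {P : BlockSeq k | ∀ i : Fin s.length, P.1 i.1 = s.get i}}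

/-- The Souslin operation applied to a Souslin scheme. -/
def SouslinOp {α : Type*} (F : List ℕ → Set α) : Set α :=
  ⋃ x : ℕ → ℕ, ⋂ n : ℕ, F (List.ofFn fun i : Fin n => x i.1)

/-- `A` is Souslin measurable: it belongs to every field of sets containing the open
sets and closed under the Souslin operation. -/
def SouslinMeasurable {α : Type*} [TopologicalSpace α] (A : Set α) : Prop :=
  ∀ 𝓕 : Set (Set α),
    (∀ O : Set α, IsOpen O → O ∈ 𝓕) →
    (∀ B ∈ 𝓕, Bᶜ ∈ 𝓕) →
    (∀ B ∈ 𝓕, ∀ C ∈ 𝓕, B ∪ C ∈ 𝓕) →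
    (∀ F : List ℕ → Set α, (∀ s, F s ∈ 𝓕) → SouslinOp F ∈ 𝓕) →
    A ∈ 𝓕

/-- The map `Φ_m : FIN_{±2m} → FIN_{±m}` (its defining formula does not depend on `m`). -/
def Phi (p : ℕ → ℤ) : ℕ → ℤ := fun n =>
  if p n % 2 = 0 then p n / 2
  else if 0 < p n then (p n - 1) / 2
  else (p n + 1) / 2

/-- `Ψ = Φ_k ∘ Φ_{2k} : FIN_{±4k} → FIN_{±k}`. -/
def Psi (p : ℕ → ℤ) : ℕ → ℤ := Phi (Phi p)

/-- The one-coordinate version of `-T`. -/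
def gT (a : ℤ) : ℤ := -(if 0 < a then a - 1 else if a < 0 then a + 1 else 0)

theorem negT_apply' (p : ℕ → ℤ) (n : ℕ) : negT p n = gT (p n) := by
  simp [negT, tetris, gT]

theorem negT_iter_apply (j : ℕ) (p : ℕ → ℤ) (n : ℕ) : negT^[j] p n = gT^[j] (p n) := by
  induction j generalizing p with
  | zero => rfl
  | succ j ih => rw [Function.iterate_succ_apply, Function.iterate_succ_apply, ih, negT_apply']

theorem gT_iter_zero (j : ℕ) : gT^[j] 0 = 0 := by
  induction j with
  | zero => rfl
  | succ j ih => rw [Function.iterate_succ_apply]; exact ih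

theorem gT_abs (k : ℕ) (a : ℤ) (h : |a| ≤ ((k + 1 : ℕ) : ℤ)) : |gT a| ≤ (k : ℤ) := by
  rw [abs_le] at *
  unfold gT
  push_cast at h
  split_ifs <;> constructor <;> omega

theorem gT_iter_k (k : ℕ) (a : ℤ) (h : |a| ≤ (k : ℤ)) : gT^[k] a = 0 := by
  induction k generalizing a with
  | zero => simpa using h
  | succ k ih => rw [Function.iterate_succ_apply]; exact ih _ (gT_abs k a h)

theorem negT_iter_k (k : ℕ) (p : ℕ → ℤ) (h : IsFin k p) : negT^[k] p = 0 := by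
  funext n
  rw [negT_iter_apply, gT_iter_k k _ (h.2.1 n)]; rfl

theorem gT_sum (i : ℕ) (s : Finset ℕ) (a : ℕ → ℤ)
    (h : ∀ x y, x ≠ y → a x = 0 ∨ a y = 0) :
    gT^[i] (∑ l ∈ s, a l) = ∑ l ∈ s, gT^[i] (a l) := by
  by_cases h0 : ∃ x ∈ s, a x ≠ 0
  · obtain ⟨x, hx, hax⟩ := h0
    have hz : ∀ y, y ≠ x → a y = 0 := fun y hy => (h x y hy.symm).resolve_left hax
    rw [Finset.sum_eq_single_of_mem x hx (fun y _ hy => hz y hy),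
      Finset.sum_eq_single_of_mem x hx (fun y _ hy => by rw [hz y hy, gT_iter_zero])]
  · push Not at h0
    rw [Finset.sum_eq_zero h0, gT_iter_zero,
      Finset.sum_eq_zero (fun y hy => by rw [h0 y hy, gT_iter_zero])]

theorem negT_sum (P : ℕ → ℕ → ℤ) (hP : ∀ m n : ℕ, m < n → BlockLt (P m) (P n))
    (i : ℕ) (s : Finset ℕ) (e : ℕ → ℕ) :
    negT^[i] (∑ l ∈ s, negT^[e l] (P l)) = ∑ l ∈ s, negT^[i + e l] (P l) := by
  funext n
  rw [negT_iter_apply, Finset.sum_apply, Finset.sum_apply, gT_sum]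
  · refine Finset.sum_congr rfl fun l _ => ?_
    rw [Function.iterate_add_apply, negT_iter_apply i]
  · intro x y hxy
    rw [negT_iter_apply, negT_iter_apply]
    have : P x n = 0 ∨ P y n = 0 := by
      by_contra hc
      push Not at hc
      rcases lt_or_gt_of_ne hxy with h | h
      · exact lt_irrefl _ (hP x y h n n hc.1 hc.2)
      · exact lt_irrefl _ (hP y x h n n hc.2 hc.1)
    rcases this with h | h
    · left; rw [h, gT_iter_zero]
    · right; rw [h, gT_iter_zero]

theorem span_mem (k : ℕ) (P : ℕ → ℕ → ℤ) (C : ℕ → Set (ℕ → ℤ))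
    (hP : ∀ m n : ℕ, m < n → BlockLt (P m) (P n))
    (hPC : ∀ n, P n ∈ C n)
    (hC : ∀ n, ∀ q ∈ C (n + 1), ∀ j ≤ k,
      P n + negT^[j] q ∈ C n ∧ negT^[j] (P n) + q ∈ C n)
    (d : ℕ) : ∀ (m : ℕ) (e : ℕ → ℕ), (∀ i, e i ≤ k) →
      (∃ i ∈ Finset.Ico m (m + d), e i = 0) →
      ∑ i ∈ Finset.Ico m (m + d), negT^[e i] (P i) ∈ C m := by
  induction d with
  | zero => rintro m e _ ⟨i, hi, _⟩; simp at hi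
  | succ d ih =>
    intro m e he h0
    rw [Finset.sum_eq_sum_Ico_succ_bot (by omega)]
    rw [show m + (d + 1) = (m + 1) + d by omega] at *
    by_cases h1 : ∃ i ∈ Finset.Ico (m + 1) ((m + 1) + d), e i = 0
    · exact (hC m _ (ih (m + 1) e he h1) (e m) (he m)).2
    · have hm : e m = 0 := by
        obtain ⟨i, hi, hei⟩ := h0
        by_cases him : i = m
        · rwa [← him]
        · exfalso; apply h1; refine ⟨i, ?_, hei⟩
          simp only [Finset.mem_Ico] at *; omega
      rw [hm]
      by_cases hd : (Finset.Ico (m + 1) ((m + 1) + d)).Nonempty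
      · obtain ⟨l, hl, hmin⟩ := Finset.exists_min_image _ e hd
        have hy := ih (m + 1) (fun x => e x - e l) (fun i => (Nat.sub_le _ _).trans (he i))
          ⟨l, hl, by simp⟩
        have := (hC m _ hy (e l) (he l)).1
        rw [negT_sum P hP] at this
        have heq : ∑ x ∈ Finset.Ico (m + 1) (m + 1 + d), negT^[e l + (e x - e l)] (P x) =
            ∑ x ∈ Finset.Ico (m + 1) (m + 1 + d), negT^[e x] (P x) := by
          refine Finset.sum_congr rfl fun x hx => ?_
          rw [Nat.add_sub_cancel' (hmin x hx)]
        rw [heq] at this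
        exact this
      · rw [Finset.not_nonempty_iff_eq_empty] at hd
        rw [hd]; simpa using hPC m

theorem list_sum_ne (t : List (ℕ → ℤ)) (ht : t.Pairwise BlockLt) (m : ℕ) :
    ∀ p ∈ t, p m ≠ 0 → t.sum m ≠ 0 := by
  induction t with
  | nil => simp
  | cons a t ih =>
    rw [List.pairwise_cons] at ht
    intro p hp hpm
    rw [List.sum_cons, Pi.add_apply]
    rcases List.mem_cons.1 hp with rfl | hp
    · have : t.sum m = 0 := by
        have hz : ∀ q ∈ t, q m = 0 := by
          intro q hq
          by_contra hc
          exact lt_irrefl _ (ht.1 q hq m m hpm hc)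
        clear ht ih hp
        induction t with
        | nil => rfl
        | cons b t ih2 =>
          rw [List.sum_cons, Pi.add_apply, hz b (by simp), zero_add]
          exact ih2 fun q hq => hz q (by simp [hq])
      rwa [this, add_zero]
    · have : a m = 0 := by
        by_contra hc
        exact lt_irrefl _ (ht.1 p hp m m hc hpm)
      rw [this, zero_add]; exact ih ht.2 p hp hpm

theorem finite_fin (k : ℕ) (F : Set ℕ) (hF : F.Finite) :
    {p : ℕ → ℤ | IsFin k p ∧ ∀ m, p m ≠ 0 → m ∈ F}.Finite := by
  have := hF.to_subtype
  apply Set.Finite.of_finite_image (f := fun (p : ℕ → ℤ) (n : F) => p n)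
  · refine Set.Finite.subset (Set.Finite.pi' (fun _ : F => Set.finite_Icc (-(k : ℤ)) k)) ?_
    rintro _ ⟨p, hp, rfl⟩ n
    exact abs_le.1 (hp.1.2.1 n)
  · intro p hp q hq hpq
    funext n
    by_cases hn : n ∈ F
    · exact congrFun hpq ⟨n, hn⟩
    · rw [not_not.1 (fun h => hn (hp.2 n h)), not_not.1 (fun h => hn (hq.2 n h))]

theorem finite_nodes (k : ℕ) (hk : 1 ≤ k) (F : Set ℕ) (hF : F.Finite) :
    {t : List (ℕ → ℤ) | IsFinBlockSeq k t ∧ ∀ m, t.sum m ≠ 0 → m ∈ F}.Finite := by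
  classical
  set S := {p : ℕ → ℤ | IsFin k p ∧ ∀ m, p m ≠ 0 → m ∈ F} with hS
  have hfin : S.Finite := finite_fin k F hF
  have := hfin.fintype
  have h2 : (Set.range (fun l : {l : List S // l.Nodup} => l.1.map Subtype.val)).Finite :=
    Set.finite_range _
  refine h2.subset ?_
  rintro t ⟨ht, hsum⟩
  have hmem : ∀ p ∈ t, p ∈ S := fun p hp =>
    ⟨ht.1 p hp, fun m hm => hsum m (list_sum_ne t ht.2 m p hp hm)⟩
  have hnd : t.Nodup := by
    rw [List.nodup_iff_pairwise_ne]
    refine ht.2.imp_of_mem ?_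
    rintro a b ha hb hab rfl
    obtain ⟨n, hn⟩ := (ht.1 a ha).2.2
    have : a n ≠ 0 := by
      intro h; rw [h] at hn; simp at hn; omega
    exact lt_irrefl _ (hab n n this this)
  refine ⟨⟨t.attach.map (fun p => ⟨p.1, hmem p.1 p.2⟩), ?_⟩, ?_⟩
  · refine List.Nodup.map ?_ (List.nodup_attach.2 hnd)
    intro a b hab
    exact Subtype.ext (congrArg (fun x : S => x.1) hab)
  · simp [List.map_map, Function.comp_def]

/-- The set required by condition (1) for a finite set of coordinates. -/
def nodeSet (U : Set (List (ℕ → ℤ))) (F : Set ℕ) : Set (ℕ → ℤ) :=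
  {p | ∀ t ∈ U, (∀ m : ℕ, t.sum m ≠ 0 → m ∈ F) →
    t ++ [p] ∈ U ∧ -p ∈ approx 1 {q | t ++ [q] ∈ U}}

theorem nodeSet_mem (k : ℕ) (hk : 1 ≤ k) (𝒰 : Ultrafilter (ℕ → ℤ))
    (h𝒰 : IsGowersUF k 𝒰) (U : Set (List (ℕ → ℤ))) (hU : IsUTree k 𝒰 U [])
    (F : Set ℕ) (hF : F.Finite) : nodeSet U F ∈ 𝒰 := by
  have hfin : {t | t ∈ U ∧ ∀ m, t.sum m ≠ 0 → m ∈ F}.Finite :=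
    (finite_nodes k hk F hF).subset fun t ht => ⟨hU.blocks t ht.1, ht.2⟩
  have : (⋂ t ∈ {t | t ∈ U ∧ ∀ m, t.sum m ≠ 0 → m ∈ F},
      ({p | t ++ [p] ∈ U} ∩ {p | -p ∈ approx 1 {q | t ++ [q] ∈ U}})) ∈ (𝒰 : Filter (ℕ → ℤ)) := by
    rw [Filter.biInter_mem hfin]
    intro t ht
    have hb := hU.branch t ht.1 (List.nil_prefix)
    exact Filter.inter_mem hb (h𝒰.2.1 _ hb)
  refine Filter.mem_of_superset this ?_
  intro p hp t ht hs
  simp only [Set.mem_iInter] at hp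
  exact hp t ⟨ht, hs⟩

theorem beyond_mem (k : ℕ) (𝒰 : Ultrafilter (ℕ → ℤ))
    (h𝒰 : IsGowersUF k 𝒰) (F : Set ℕ) (hF : F.Finite) :
    {q : ℕ → ℤ | ∀ i ∈ F, ∀ n, q n ≠ 0 → i < n} ∈ 𝒰 := by
  obtain ⟨b, hb⟩ := hF.bddAbove
  refine Filter.mem_of_superset (h𝒰.1.2 (b + 1)) ?_
  intro q hq i hi n hn
  by_contra hc
  have := hb hi
  exact hn (hq n (by omega))

/-- Sets allowed as stage sets over the finite set of coordinates `F`. -/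
def GoodSet (k : ℕ) (𝒰 : Ultrafilter (ℕ → ℤ)) (U : Set (List (ℕ → ℤ)))
    (F : Set ℕ) (C : Set (ℕ → ℤ)) : Prop :=
  F.Finite ∧ C ∈ 𝒰 ∧ C ⊆ {p | IsFin k p} ∧ C ⊆ nodeSet U F ∧
    C ⊆ {q : ℕ → ℤ | ∀ i ∈ F, ∀ n, q n ≠ 0 → i < n}

theorem step_exists (k : ℕ) (hk : 1 ≤ k) (𝒰 : Ultrafilter (ℕ → ℤ))
    (h𝒰 : IsGowersUF k 𝒰) (U : Set (List (ℕ → ℤ))) (hU : IsUTree k 𝒰 U [])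
    (F : Set ℕ) (C : Set (ℕ → ℤ)) (hC : GoodSet k 𝒰 U F C) :
    ∃ p ∈ C, ∃ C', GoodSet k 𝒰 U (F ∪ {m | p m ≠ 0}) C' ∧ C' ⊆ C ∧
      ∀ q ∈ C', ∀ j ≤ k, p + negT^[j] q ∈ C ∧ negT^[j] p + q ∈ C := by
  have h1 : ∀ᶠ p in (𝒰 : Filter (ℕ → ℤ)), ∀ j ∈ Set.Iic k,
      ({q | p + negT^[j] q ∈ C} ∈ 𝒰 ∧ {q | negT^[j] p + q ∈ C} ∈ 𝒰) := by
    rw [Filter.eventually_all_finite (Set.finite_Iic k)]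
    intro j hj
    have ha := ((h𝒰.2.2 j hj C).1).2 hC.2.1
    have hb := ((h𝒰.2.2 j hj C).2).2 hC.2.1
    unfold SumMem at ha hb
    filter_upwards [ha, Ultrafilter.mem_map.1 hb] with p hpa hpb
    constructor
    · exact Filter.mem_of_superset (Ultrafilter.mem_map.1 hpa) fun q hq => hq.2
    · exact Filter.mem_of_superset hpb fun q hq => hq.2
  obtain ⟨p, hp, hpC⟩ := (h1.and (Filter.eventually_mem_set.2 hC.2.1)).exists
  have hF' : (F ∪ {m | p m ≠ 0}).Finite := hC.1.union (hC.2.2.1 hpC).1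
  have h2 : {q | ∀ j ∈ Set.Iic k, p + negT^[j] q ∈ C ∧ negT^[j] p + q ∈ C} ∈ 𝒰 := by
    change ∀ᶠ q in (𝒰 : Filter (ℕ → ℤ)), _
    rw [Filter.eventually_all_finite (Set.finite_Iic k)]
    intro j hj
    exact Filter.Eventually.and (hp j hj).1 (hp j hj).2
  refine ⟨p, hpC, C ∩ ({q | ∀ j ∈ Set.Iic k, p + negT^[j] q ∈ C ∧ negT^[j] p + q ∈ C} ∩
    (nodeSet U (F ∪ {m | p m ≠ 0}) ∩
      {q : ℕ → ℤ | ∀ i ∈ F ∪ {m | p m ≠ 0}, ∀ n, q n ≠ 0 → i < n})), ?_, ?_, ?_⟩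
  · refine ⟨hF', ?_, ?_, ?_, ?_⟩
    · exact Filter.inter_mem hC.2.1 (Filter.inter_mem h2 (Filter.inter_mem
        (nodeSet_mem k hk 𝒰 h𝒰 U hU _ hF') (beyond_mem k 𝒰 h𝒰 _ hF')))
    · exact fun q hq => hC.2.2.1 hq.1
    · exact fun q hq => hq.2.2.1
    · exact fun q hq => hq.2.2.2
  · exact fun q hq => hq.1
  · exact fun q hq j hj => hq.2.1 j hj

/-- for every `𝒰`-tree `U` with stem `∅` there are an infinite block
sequence `P = (p_n)` and a decreasing sequence `A₀ ⊇ A₁ ⊇ ⋯` of subsets of `FIN_{±k}`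
such that (1) `A_n ⊆ U_t ∩ −(U_t)₁` for every `t ∈ U` with
`supp(⋃t) ⊆ ⋃_{i<n} supp p_i`, and (2) `⟨p_m, …, p_n⟩_{(−T)} ⊆ A_m` for `m ≤ n`. -/
theorem UTree_block_sequence_with_sets (k : ℕ) (hk : 1 ≤ k) (𝒰 : Ultrafilter (ℕ → ℤ))
    (h𝒰 : IsGowersUF k 𝒰) (U : Set (List (ℕ → ℤ))) (hU : IsUTree k 𝒰 U []) :
    ∃ (P : ℕ → ℕ → ℤ) (A : ℕ → Set (ℕ → ℤ)), IsBlockSeq k P ∧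
      (∀ n : ℕ, A (n + 1) ⊆ A n) ∧
      (∀ n : ℕ, ∀ t ∈ U, (∀ m : ℕ, t.sum m ≠ 0 → ∃ i < n, P i m ≠ 0) →
        A n ⊆ {p | t ++ [p] ∈ U} ∩ {p | -p ∈ approx 1 {q | t ++ [q] ∈ U}}) ∧
      (∀ m n : ℕ, m ≤ n → ∀ q : ℕ → ℤ, InSpanNegTRange k P m n q → q ∈ A m) := by
  classical
  have h0 : ∃ C, GoodSet k 𝒰 U ∅ C :=
    ⟨{p | IsFin k p} ∩ (nodeSet U ∅ ∩ {q : ℕ → ℤ | ∀ i ∈ (∅ : Set ℕ), ∀ n, q n ≠ 0 → i < n}),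
      Set.finite_empty,
      Filter.inter_mem h𝒰.1.1 (Filter.inter_mem (nodeSet_mem k hk 𝒰 h𝒰 U hU _ Set.finite_empty)
        (beyond_mem k 𝒰 h𝒰 _ Set.finite_empty)),
      fun q hq => hq.1, fun q hq => hq.2.1, fun q hq => hq.2.2⟩
  obtain ⟨C0, hC0⟩ := h0
  choose! p hp C' hC' hsub hstep using step_exists k hk 𝒰 h𝒰 U hU
  let st : ℕ → Set ℕ × Set (ℕ → ℤ) := fun n =>
    Nat.rec (∅, C0) (fun _ s => (s.1 ∪ {m | p s.1 s.2 m ≠ 0}, C' s.1 s.2)) n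
  have hsucc : ∀ n, st (n + 1) =
      ((st n).1 ∪ {m | p (st n).1 (st n).2 m ≠ 0}, C' (st n).1 (st n).2) := fun n => rfl
  have hgood : ∀ n, GoodSet k 𝒰 U (st n).1 (st n).2 := by
    intro n
    induction n with
    | zero => exact hC0
    | succ n ih => rw [hsucc]; exact hC' _ _ ih
  let P : ℕ → ℕ → ℤ := fun n => p (st n).1 (st n).2
  have hPC : ∀ n, P n ∈ (st n).2 := fun n => hp _ _ (hgood n)
  have hF : ∀ n m, m ∈ (st n).1 ↔ ∃ i < n, P i m ≠ 0 := by
    intro n m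
    induction n with
    | zero => simp [st]
    | succ n ih =>
      rw [hsucc]
      change (m ∈ (st n).1 ∨ P n m ≠ 0) ↔ _
      rw [ih]
      constructor
      · rintro (⟨i, hi, h⟩ | h)
        · exact ⟨i, by omega, h⟩
        · exact ⟨n, by omega, h⟩
      · rintro ⟨i, hi, h⟩
        rcases Nat.lt_succ_iff_lt_or_eq.1 hi with h' | rfl
        · exact Or.inl ⟨i, h', h⟩
        · exact Or.inr h
  have hfinP : ∀ n, IsFin k (P n) := fun n => (hgood n).2.2.1 (hPC n)
  have hblock : ∀ m n : ℕ, m < n → BlockLt (P m) (P n) := by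
    intro m n hmn a b ha hb
    exact (hgood n).2.2.2.2 (hPC n) a ((hF n a).2 ⟨m, hmn, ha⟩) b hb
  refine ⟨P, fun n => (st n).2, ⟨hfinP, hblock⟩, ?_, ?_, ?_⟩
  · intro n
    change (st (n + 1)).2 ⊆ (st n).2
    rw [hsucc]; exact hsub _ _ (hgood n)
  · intro n t ht hs q hq
    exact (hgood n).2.2.2.1 hq t ht fun m hm => (hF n m).2 (hs m hm)
  · rintro m n hmn q ⟨l, ν, j, hν, hrange, hj, ⟨i0, hi0⟩, rfl⟩
    have key := span_mem k P (fun n => (st n).2) hblock hPC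
      (fun n q hq i hi => hstep _ _ (hgood n) q hq i hi) (n + 1 - m) m
      (Function.extend ν j fun _ => k) ?_ ?_
    · rw [show m + (n + 1 - m) = n + 1 by omega] at key
      convert key using 1
      have himg : ∑ i, negT^[j i] (P (ν i)) =
          ∑ x ∈ Finset.univ.image ν, negT^[Function.extend ν j (fun _ => k) x] (P x) := by
        rw [Finset.sum_image (fun a _ b _ h => hν.injective h)]
        refine Finset.sum_congr rfl fun i _ => ?_
        rw [hν.injective.extend_apply]
      rw [himg]
      refine Finset.sum_subset ?_ ?_
      · intro x hx
        obtain ⟨i, -, rfl⟩ := Finset.mem_image.1 hx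
        have := hrange i
        rw [Finset.mem_Ico]; omega
      · intro x _ hx
        rw [Function.extend_apply', negT_iter_k k _ (hfinP x)]
        rintro ⟨i, rfl⟩
        exact hx (Finset.mem_image_of_mem _ (Finset.mem_univ _))
    · intro i
      by_cases h : ∃ a, ν a = i
      · obtain ⟨a, rfl⟩ := h
        rw [hν.injective.extend_apply]; exact (hj a).le
      · rw [Function.extend_apply' _ _ _ h]
    · refine ⟨ν i0, ?_, by rw [hν.injective.extend_apply]; exact hi0⟩
      have := hrange i0
      rw [Finset.mem_Ico]; omega
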